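/- Let A be an invertible k×k integer matrix whose only complex eigenvalue is 1. Then for every natural number m ≥ 1 there exists n ≥ 1 such that every entry of A^n - I is divisible by m. In fact one may take n = (k-1)!·m. -/

import Mathlib

theorem stmt_1_nilp (k : ℕ) (A : Matrix (Fin k) (Fin k) ℤ)
    (heig : ∀ z : ℂ, ((A.map (Int.cast : ℤ → ℂ)).charpoly).IsRoot z → z = 1) :
    (A - 1) ^ k = 0 := by
  set B := A.map (Int.cast : ℤ → ℂ) with hB
  have hs : B.charpoly.Splits := IsAlgClosed.splits _
  have hr : B.charpoly.roots = Multiset.replicate k 1 := by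
    rw [Multiset.eq_replicate]
    refine ⟨?_, fun b hb => heig b (Polynomial.isRoot_of_mem_roots hb)⟩
    rw [← hs.natDegree_eq_card_roots, Matrix.charpoly_natDegree_eq_dim, Fintype.card_fin]
  have hc : B.charpoly = (Polynomial.X - Polynomial.C 1) ^ k := by
    rw [hs.eq_prod_roots_of_monic B.charpoly_monic, hr]
    simp
  have h0 : (B - 1) ^ k = 0 := by
    have := Matrix.aeval_self_charpoly B
    rw [hc] at this
    simpa using this
  have hinj : Function.Injective ((Int.castRingHom ℂ).mapMatrix : Matrix (Fin k) (Fin k) ℤ →+* _) :=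
    Matrix.map_injective Int.cast_injective
  apply hinj
  rw [map_pow, map_sub, map_one, map_zero]
  exact h0

theorem stmt_1 (k : ℕ) (A : Matrix (Fin k) (Fin k) ℤ) (hA : IsUnit A)
    (heig : ∀ z : ℂ, ((A.map (Int.cast : ℤ → ℂ)).charpoly).IsRoot z → z = 1)
    (m : ℕ) (hm : 1 ≤ m) :
    ∃ n : ℕ, 1 ≤ n ∧ n = (k - 1).factorial * m ∧
      ∀ i j : Fin k, (m : ℤ) ∣ (A ^ n - 1) i j := by
  have hN := stmt_1_nilp k A heig
  refine ⟨_, Nat.mul_pos (Nat.factorial_pos _) hm, rfl, ?_⟩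
  set n := (k - 1).factorial * m with hn
  have key : ∀ j, j + 1 < k → m ∣ n.choose (j + 1) := by
    intro j hj
    obtain ⟨c, hc⟩ : j + 1 ∣ (k - 1).factorial := Nat.dvd_factorial (by omega) (by omega)
    have hnpos : 0 < n := Nat.mul_pos (Nat.factorial_pos _) hm
    obtain ⟨p, hp⟩ : ∃ p, n = p + 1 := ⟨n - 1, by omega⟩
    have h := Nat.add_one_mul_choose_eq p j
    rw [← hp] at h
    refine ⟨c * p.choose j, ?_⟩
    apply Nat.eq_of_mul_eq_mul_right (Nat.succ_pos j)
    rw [Nat.succ_eq_add_one, ← h, hn, hc]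
    ring
  have hd : ((m : ℕ) : Matrix (Fin k) (Fin k) ℤ) ∣ A ^ n - 1 := by
    have h := (Commute.one_right (A - 1)).add_pow n
    rw [sub_add_cancel, Finset.sum_range_succ'] at h
    rw [h]
    simp only [one_pow, mul_one, pow_zero, Nat.choose_zero_right, Nat.cast_one, add_sub_cancel_right]
    apply Finset.dvd_sum
    intro j _
    by_cases hj : j + 1 < k
    · rw [← (Nat.cast_commute (n.choose (j+1)) ((A - 1) ^ (j+1))).eq]
      exact Dvd.dvd.mul_right (Nat.cast_dvd_cast (key j hj)) _
    · rw [pow_eq_zero_of_le (by omega) hN, zero_mul]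
      exact dvd_zero _
  obtain ⟨B, hB⟩ := hd
  intro i j
  rw [hB, ← nsmul_eq_mul]
  exact ⟨B i j, by simp⟩
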